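/- arXiv:2510.18617 — 2 statements merged into one kernel-verified Lean document; each statement's English description precedes it below -/
import Mathlib

section
/- Let h : ℝ^m → ℝ be convex, let A : ℝⁿ → ℝ^m be a continuous linear map with operator norm ‖A‖ ≤ σ_A, let ρ > 0, λ ∈ ℝ^m and x, x' ∈ ℝⁿ. Suppose y ∈ ℝ^m is a minimizer over ℝ^m of z ↦ h(z) − ⟨λ, Ax − z⟩ + (ρ/2)‖Ax − z‖², and define λ̄ := λ − ρ(Ax' − y). Then there exists a subgradient g of h at y (i.e., h(w) ≥ h(y) + ⟨g, w − y⟩ for all w ∈ ℝ^m) such that ‖g − (−λ̄)‖ ≤ ρ·σ_A·‖x' − x‖. In particular, the distance from −λ̄ to the subdifferential ∂h(y) is at most ρσ_A‖x' − x‖. -/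
open scoped RealInnerProductSpace

/-- A real number is nonnegative if it is so up to arbitrarily small positive multiples of a
constant. -/
lemma nonneg_of_forall_nonneg_add_mul {D C : ℝ}
    (hD : ∀ t : ℝ, 0 < t → t ≤ 1 → 0 ≤ D + t * C) : 0 ≤ D := by
  by_contra! hneg
  have hpos : 0 < |C| - D := by linarith [abs_nonneg C]
  have ht := hD (-D / (2 * (|C| - D))) (by apply div_pos <;> linarith)
    (by rw [div_le_one (by linarith)]; linarith [abs_nonneg C])
  have hle : -D / (2 * (|C| - D)) * C ≤ -D / 2 := by
    rw [div_mul_eq_mul_div, div_le_div_iff₀ (by linarith) two_pos]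
    nlinarith [mul_nonneg (neg_nonneg.2 hneg.le) (sub_nonneg.2 (le_abs_self C)), sq_nonneg D]
  linarith

/-- First-order optimality: a minimizer `y` of `z ↦ h z - ⟪l, a - z⟫ + (ρ / 2) * ‖a - z‖ ^ 2`
with `h` convex has `ρ • (a - y) - l` as a subgradient of `h` at `y`. -/
lemma ConvexOn.subgradient_of_forall_augmented_le {E : Type*} [NormedAddCommGroup E]
    [InnerProductSpace ℝ E] {h : E → ℝ} (hconv : ConvexOn ℝ Set.univ h) {ρ : ℝ} {l a y : E}
    (hmin : ∀ z, h y - ⟪l, a - y⟫ + (ρ / 2) * ‖a - y‖ ^ 2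
        ≤ h z - ⟪l, a - z⟫ + (ρ / 2) * ‖a - z‖ ^ 2) (w : E) :
    h y + ⟪ρ • (a - y) - l, w - y⟫ ≤ h w := by
  suffices hD : 0 ≤ h w - h y - ⟪ρ • (a - y) - l, w - y⟫ by linarith
  refine nonneg_of_forall_nonneg_add_mul (C := ρ / 2 * ‖w - y‖ ^ 2) fun t ht ht1 => ?_
  have hz := hmin (y + t • (w - y))
  have hc : h (y + t • (w - y)) ≤ (1 - t) * h y + t * h w := by
    have hc := hconv.2 (Set.mem_univ y) (Set.mem_univ w) (sub_nonneg.2 ht1) ht.le (by ring)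
    rwa [show (1 - t) • y + t • w = y + t • (w - y) by module] at hc
  rw [← sub_sub, inner_sub_right l (a - y), norm_sub_sq_real (a - y), norm_smul, inner_smul_right,
    inner_smul_right, Real.norm_of_nonneg ht.le] at hz
  rw [inner_sub_left, real_inner_smul_left]
  refine nonneg_of_mul_nonneg_right (a := t) ?_ ht
  nlinarith

/-- If `y` minimizes the augmented Lagrangian in `y`, then `-λ̄`, with
`λ̄ = λ - ρ(Ax' - y)`, is within distance `ρ σ_A ‖x' - x‖` of the subdifferential
`∂h(y)`. -/
theorem stmt_2 (n m : ℕ) (h : EuclideanSpace ℝ (Fin m) → ℝ)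
    (hconv : ConvexOn ℝ Set.univ h)
    (A : EuclideanSpace ℝ (Fin n) →L[ℝ] EuclideanSpace ℝ (Fin m))
    (σA : ℝ) (hA : ‖A‖ ≤ σA) (ρ : ℝ) (hρ : 0 < ρ)
    (lam : EuclideanSpace ℝ (Fin m)) (x x' : EuclideanSpace ℝ (Fin n))
    (y : EuclideanSpace ℝ (Fin m))
    (hmin : ∀ z, h y - ⟪lam, A x - y⟫ + (ρ / 2) * ‖A x - y‖ ^ 2
        ≤ h z - ⟪lam, A x - z⟫ + (ρ / 2) * ‖A x - z‖ ^ 2) :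
    ∃ g : EuclideanSpace ℝ (Fin m),
      (∀ w, h y + ⟪g, w - y⟫ ≤ h w) ∧
      ‖g - (-(lam - ρ • (A x' - y)))‖ ≤ ρ * σA * ‖x' - x‖ := by
  refine ⟨ρ • (A x - y) - lam, hconv.subgradient_of_forall_augmented_le hmin, ?_⟩
  have hg : ρ • (A x - y) - lam - (-(lam - ρ • (A x' - y))) = -(ρ • A (x' - x)) := by
    rw [map_sub]; module
  rw [hg, norm_neg, norm_smul, Real.norm_of_nonneg hρ.le, mul_assoc]
  gcongr
  exact A.le_of_opNorm_le hA _
end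

section
/- Let (r_k)_{k≥0} be a sequence in ℝ^m, (γ_k)_{k≥0} a sequence of nonnegative reals, and (λ_k)_{k≥0} a sequence in ℝ^m satisfying λ_0 = 0 and λ_k = λ_{k−1} − γ_k r_k for all k ≥ 1. Suppose that for every k ≥ 1, γ_k‖r_k‖ ≤ γ_0‖r_0‖(log 2)² / ((k+1)²·log(k+2)), where γ_0 ≥ 0 and log denotes the natural logarithm. Then for every k ≥ 0, ‖λ_k‖ ≤ (π²/6)·γ_0‖r_0‖. -/
/-- The logarithmic factor in the adaptive step-size bound is at most one. -/
theorem log_two_sq_div_le_one_div_sq (k : ℕ) :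
    Real.log 2 ^ 2 / (((k : ℝ) + 1) ^ 2 * Real.log ((k : ℝ) + 2)) ≤ 1 / ((k : ℝ) + 1) ^ 2 := by
  have hpos : 0 < Real.log 2 := Real.log_pos one_lt_two
  have hone : Real.log 2 ≤ 1 := by linarith [Real.log_two_lt_d9]
  have hmono : Real.log 2 ≤ Real.log ((k : ℝ) + 2) :=
    Real.log_le_log two_pos (by linarith [k.cast_nonneg (α := ℝ)])
  have hlog : 0 < Real.log ((k : ℝ) + 2) := hpos.trans_le hmono
  rw [div_le_div_iff₀ (by positivity) (by positivity), one_mul, mul_comm]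
  gcongr
  nlinarith

/-- Boundedness of the dual multipliers: if `λ_0 = 0`, `λ_k = λ_{k-1} - γ_k r_k`
and `γ_k ‖r_k‖ ≤ γ_0 ‖r_0‖ (log 2)² / ((k+1)² log(k+2))` for all `k ≥ 1`,
then `‖λ_k‖ ≤ (π²/6) γ_0 ‖r_0‖` for all `k`. -/
theorem stmt_3 (m : ℕ) (r : ℕ → EuclideanSpace ℝ (Fin m)) (γ : ℕ → ℝ)
    (lam : ℕ → EuclideanSpace ℝ (Fin m))
    (hγ : ∀ k, 0 ≤ γ k) (hγ0 : 0 ≤ γ 0)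
    (h0 : lam 0 = 0)
    (hrec : ∀ k, 1 ≤ k → lam k = lam (k - 1) - γ k • r k)
    (hbound : ∀ k : ℕ, 1 ≤ k →
      γ k * ‖r k‖ ≤ γ 0 * ‖r 0‖ * (Real.log 2) ^ 2 /
        (((k : ℝ) + 1) ^ 2 * Real.log ((k : ℝ) + 2))) :
    ∀ k, ‖lam k‖ ≤ (Real.pi ^ 2 / 6) * (γ 0 * ‖r 0‖) := by
  have partial_bound : ∀ k, ‖lam k‖ ≤
      (∑ n ∈ Finset.range (k + 2), 1 / (n : ℝ) ^ 2) * (γ 0 * ‖r 0‖) := by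
    intro k
    induction k with
    | zero =>
      rw [h0, norm_zero]
      positivity
    | succ k ih =>
      have hstep : γ (k + 1) * ‖r (k + 1)‖ ≤
          1 / ((k + 2 : ℕ) : ℝ) ^ 2 * (γ 0 * ‖r 0‖) := by
        calc γ (k + 1) * ‖r (k + 1)‖
            ≤ _ := hbound (k + 1) (Nat.le_add_left 1 k)
          _ = _ := mul_div_assoc _ _ _
          _ ≤ γ 0 * ‖r 0‖ * (1 / (((k + 1 : ℕ) : ℝ) + 1) ^ 2) :=
            mul_le_mul_of_nonneg_left (log_two_sq_div_le_one_div_sq (k + 1)) (by positivity)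
          _ = _ := by push_cast; ring
      rw [hrec (k + 1) (Nat.le_add_left 1 k), Nat.add_sub_cancel, Finset.sum_range_succ, add_mul]
      calc ‖lam k - γ (k + 1) • r (k + 1)‖
          ≤ ‖lam k‖ + ‖γ (k + 1) • r (k + 1)‖ := norm_sub_le _ _
        _ = ‖lam k‖ + γ (k + 1) * ‖r (k + 1)‖ := by
          rw [norm_smul, Real.norm_of_nonneg (hγ (k + 1))]
        _ ≤ _ := add_le_add ih hstep
  intro k
  refine (partial_bound k).trans ?_
  gcongr
  exact sum_le_hasSum _ (fun n _ => by positivity) hasSum_zeta_two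
end
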